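/- Let 𝒳, 𝒴, 𝒜, ℬ be finite nonempty sets and κ ≥ 0. Then the one-sided average measurement-dependent local set AMDL(κ), viewed as a subset of ℝ^(𝒜×ℬ×𝒳×𝒴), is a closed (and compact) set. -/

import Mathlib

/-!
A hidden variable matters only through the response data `(P(·|γ), P_γ(·|·), P_γ(·|·))` it carries,
a point of the compact space `Strategy X Y A B`, a finite product of standard simplices. Pushing `g`
forward to that space shows that the hidden-variable space may always be taken to be `Strategy` with
its Borel σ-algebra (`memAMDL_iff`). The probability measures on a compact Hausdorff space form a
compact space for weak convergence, and both the behavior and the leakage are integrals of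
continuous functions, hence weakly continuous in the measure. So `AMDL(κ)` is the continuous image
of the closed, hence compact, set of measures whose leakage is at most `κ`
(`isCompact_setOf_integral_eq`).
-/

/-- A behavior: probability distribution on `𝒜 × ℬ × 𝒳 × 𝒴`. -/
def IsBehavior {X Y A B : Type} [Fintype X] [Fintype Y] [Fintype A] [Fintype B]
    (P : A → B → X → Y → ℝ) : Prop :=
  (∀ a b x y, 0 ≤ P a b x y) ∧ (∑ a, ∑ b, ∑ x, ∑ y, P a b x y) = 1

/-- Witness that a behavior lies in the measurement-dependent local set `MDL(l,h)`. -/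
structure MDLWitness (X Y A B : Type) [Fintype X] [Fintype Y] [Fintype A] [Fintype B]
    (l h : ℝ) (P : A → B → X → Y → ℝ) where
  HV : Type
  [mHV : MeasurableSpace HV]
  g : MeasureTheory.Measure HV
  prob : MeasureTheory.IsProbabilityMeasure g
  pxy : HV → X → Y → ℝ
  pa : HV → X → A → ℝ
  pb : HV → Y → B → ℝ
  meas_pxy : ∀ x y, Measurable fun γ => pxy γ x y
  meas_pa : ∀ x a, Measurable fun γ => pa γ x a
  meas_pb : ∀ y b, Measurable fun γ => pb γ y b
  pxy_nonneg : ∀ γ x y, 0 ≤ pxy γ x y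
  pxy_sum : ∀ γ, (∑ x, ∑ y, pxy γ x y) = 1
  pa_nonneg : ∀ γ x a, 0 ≤ pa γ x a
  pa_sum : ∀ γ x, (∑ a, pa γ x a) = 1
  pb_nonneg : ∀ γ y b, 0 ≤ pb γ y b
  pb_sum : ∀ γ y, (∑ b, pb γ y b) = 1
  lower : ∀ γ x y, l ≤ pxy γ x y
  upper : ∀ γ x y, pxy γ x y ≤ h
  repr : ∀ a b x y, P a b x y = ∫ γ, pxy γ x y * pa γ x a * pb γ y b ∂g

/-- Membership in the measurement-dependent local set `MDL(l,h)`. -/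
def MemMDL {X Y A B : Type} [Fintype X] [Fintype Y] [Fintype A] [Fintype B]
    (l h : ℝ) (P : A → B → X → Y → ℝ) : Prop :=
  Nonempty (MDLWitness X Y A B l h P)

/-- Witness that a behavior lies in the one-sided average
measurement-dependent local set `AMDL(κ)`. -/
structure AMDLWitness (X Y A B : Type) [Fintype X] [Fintype Y] [Fintype A] [Fintype B]
    [Nonempty X] (κ : ℝ) (P : A → B → X → Y → ℝ) where
  HV : Type
  [mHV : MeasurableSpace HV]
  g : MeasureTheory.Measure HV
  prob : MeasureTheory.IsProbabilityMeasure g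
  px : HV → X → ℝ
  pa : HV → X → A → ℝ
  pb : HV → Y → B → ℝ
  meas_px : ∀ x, Measurable fun γ => px γ x
  meas_pa : ∀ x a, Measurable fun γ => pa γ x a
  meas_pb : ∀ y b, Measurable fun γ => pb γ y b
  px_nonneg : ∀ γ x, 0 ≤ px γ x
  px_sum : ∀ γ, (∑ x, px γ x) = 1
  pa_nonneg : ∀ γ x a, 0 ≤ pa γ x a
  pa_sum : ∀ γ x, (∑ a, pa γ x a) = 1
  pb_nonneg : ∀ γ y b, 0 ≤ pb γ y b
  pb_sum : ∀ γ y, (∑ b, pb γ y b) = 1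
  repr : ∀ a b x y, P a b x y =
    ∫ γ, px γ x * (1 / (Fintype.card Y : ℝ)) * pa γ x a * pb γ y b ∂g
  leak : (∫ γ, ((Finset.univ.sup' Finset.univ_nonempty fun x => px γ x)
      - 1 / (Fintype.card X : ℝ)) ∂g) ≤ κ

/-- Membership in the one-sided average measurement-dependent local set `AMDL(κ)`. -/
def MemAMDL {X Y A B : Type} [Fintype X] [Fintype Y] [Fintype A] [Fintype B]
    [Nonempty X] (κ : ℝ) (P : A → B → X → Y → ℝ) : Prop :=
  Nonempty (AMDLWitness X Y A B κ P)

/-- Total variation distance between two behaviors. -/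
noncomputable def tvDist {X Y A B : Type} [Fintype X] [Fintype Y] [Fintype A] [Fintype B]
    (P Q : A → B → X → Y → ℝ) : ℝ :=
  (1 / 2) * ∑ a, ∑ b, ∑ x, ∑ y, |P a b x y - Q a b x y|

/-- Affine functional on behaviors: `I(P) = I₀ + ∑ v_{abxy} P(a,b,x,y)`. -/
def affFun {X Y A B : Type} [Fintype X] [Fintype Y] [Fintype A] [Fintype B]
    (I₀ : ℝ) (v : A → B → X → Y → ℝ) (P : A → B → X → Y → ℝ) : ℝ :=
  I₀ + ∑ a, ∑ b, ∑ x, ∑ y, v a b x y * P a b x y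

open MeasureTheory

/-- On a compact Hausdorff space, the values `∫ F a b x y ∂μ` attained by probability measures `μ` subject to
an integral constraint `∫ f ∂μ ≤ κ` form a compact set when `f` and `F` are continuous, by weak
compactness of the space of probability measures. -/
theorem isCompact_setOf_integral_eq {Ω X Y A B : Type} [TopologicalSpace Ω] [T2Space Ω]
    [CompactSpace Ω] [MeasurableSpace Ω] [BorelSpace Ω] {f : Ω → ℝ} (hf : Continuous f)
    {F : A → B → X → Y → Ω → ℝ} (hF : ∀ a b x y, Continuous (F a b x y)) (κ : ℝ) :
    IsCompact {P : A → B → X → Y → ℝ | ∃ μ : ProbabilityMeasure Ω,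
      (∫ s, f s ∂(μ : Measure Ω)) ≤ κ ∧
      ∀ a b x y, P a b x y = ∫ s, F a b x y s ∂(μ : Measure Ω)} := by
  have hint {f : Ω → ℝ} (hf : Continuous f) :
      Continuous fun μ : ProbabilityMeasure Ω => ∫ s, f s ∂(μ : Measure Ω) :=
    ProbabilityMeasure.continuous_integral_continuousMap (⟨f, hf⟩ : C(Ω, ℝ))
  have hK : IsCompact {μ : ProbabilityMeasure Ω | (∫ s, f s ∂(μ : Measure Ω)) ≤ κ} :=
    (isClosed_le (hint hf) continuous_const).isCompact
  have hcont : Continuous fun (μ : ProbabilityMeasure Ω) a b x y =>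
      ∫ s, F a b x y s ∂(μ : Measure Ω) :=
    continuous_pi fun a => continuous_pi fun b => continuous_pi fun x => continuous_pi fun y =>
      hint (hF a b x y)
  convert hK.image hcont using 1
  ext P
  simp only [Set.mem_image, Set.mem_ofPred_eq, funext_iff, eq_comm]

/-- The universal hidden-variable space: an input distribution on `X` together with local response
distributions on `A` for every `x` and on `B` for every `y`. -/
abbrev Strategy (X Y A B : Type) [Fintype X] [Fintype A] [Fintype B] : Type :=
  stdSimplex ℝ X × (X → stdSimplex ℝ A) × (Y → stdSimplex ℝ B)

/-- The joint probability `P(a,b,x,y)` produced by one strategy with uniform `y`. -/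
noncomputable def Strategy.prob {X Y A B : Type} [Fintype X] [Fintype Y] [Fintype A] [Fintype B]
    (a : A) (b : B) (x : X) (y : Y) (s : Strategy X Y A B) : ℝ :=
  (s.1 : X → ℝ) x * (1 / (Fintype.card Y : ℝ)) * (s.2.1 x : A → ℝ) a * (s.2.2 y : B → ℝ) b

/-- The leakage `max_x P(x) - 1/|X|` of one strategy. -/
noncomputable def Strategy.leakage {X Y A B : Type} [Fintype X] [Fintype A] [Fintype B]
    [Nonempty X] (s : Strategy X Y A B) : ℝ :=
  (Finset.univ.sup' Finset.univ_nonempty fun x => (s.1 : X → ℝ) x) - 1 / (Fintype.card X : ℝ)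

section

variable {X Y A B : Type} [Fintype X] [Fintype Y] [Fintype A] [Fintype B]

theorem Strategy.continuous_prob (a : A) (b : B) (x : X) (y : Y) :
    Continuous (Strategy.prob (X := X) (Y := Y) a b x y) := by
  unfold Strategy.prob
  have h1 : Continuous fun s : Strategy X Y A B => (s.1 : X → ℝ) x :=
    (continuous_apply x).comp (continuous_subtype_val.comp continuous_fst)
  have h2 : Continuous fun s : Strategy X Y A B => (s.2.1 x : A → ℝ) a :=
    (continuous_apply a).comp (continuous_subtype_val.comp
      ((continuous_apply x).comp (continuous_fst.comp continuous_snd)))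
  have h3 : Continuous fun s : Strategy X Y A B => (s.2.2 y : B → ℝ) b :=
    (continuous_apply b).comp (continuous_subtype_val.comp
      ((continuous_apply y).comp (continuous_snd.comp continuous_snd)))
  exact ((h1.mul continuous_const).mul h2).mul h3

theorem Strategy.continuous_leakage {X Y A B : Type} [Fintype X] [Fintype A] [Fintype B]
    [Nonempty X] :
    Continuous (Strategy.leakage (X := X) (Y := Y) (A := A) (B := B)) := by
  unfold Strategy.leakage
  refine Continuous.sub (Continuous.finset_sup'_apply _ fun x _ => ?_) continuous_const
  exact (continuous_apply x).comp (continuous_subtype_val.comp continuous_fst)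

/-- The space `Strategy` with an arbitrary Borel probability measure suffices to describe `AMDL(κ)`:
a witness is pushed forward along the map sending `γ` to its response data. -/
theorem memAMDL_iff [Nonempty X] (κ : ℝ) (P : A → B → X → Y → ℝ) :
    MemAMDL κ P ↔ ∃ μ : ProbabilityMeasure (Strategy X Y A B),
      (∫ s, s.leakage ∂(μ : Measure (Strategy X Y A B))) ≤ κ ∧
      ∀ a b x y, P a b x y = ∫ s, s.prob a b x y ∂(μ : Measure (Strategy X Y A B)) := by
  constructor
  · rintro ⟨w⟩
    let := w.mHV
    have := w.prob
    let Φ : w.HV → Strategy X Y A B := fun γ =>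
      (⟨w.px γ, w.px_nonneg γ, w.px_sum γ⟩,
        fun x => ⟨w.pa γ x, w.pa_nonneg γ x, w.pa_sum γ x⟩,
        fun y => ⟨w.pb γ y, w.pb_nonneg γ y, w.pb_sum γ y⟩)
    have hΦ : Measurable Φ := by
      refine Measurable.prodMk ?_ (Measurable.prodMk ?_ ?_)
      · exact (measurable_pi_lambda _ w.meas_px).subtype_mk
      · exact measurable_pi_lambda _ fun x =>
          (measurable_pi_lambda _ (w.meas_pa x)).subtype_mk
      · exact measurable_pi_lambda _ fun y =>
          (measurable_pi_lambda _ (w.meas_pb y)).subtype_mk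
    refine ⟨⟨w.g.map Φ, Measure.isProbabilityMeasure_map hΦ.aemeasurable⟩, ?_, fun a b x y => ?_⟩
    · rw [ProbabilityMeasure.coe_mk, integral_map hΦ.aemeasurable
        Strategy.continuous_leakage.aestronglyMeasurable]
      exact w.leak
    · rw [ProbabilityMeasure.coe_mk, integral_map hΦ.aemeasurable
        (Strategy.continuous_prob a b x y).aestronglyMeasurable]
      exact w.repr a b x y
  · rintro ⟨μ, hleak, hrepr⟩
    exact ⟨{
      HV := Strategy X Y A B
      g := μ
      prob := inferInstance
      px := fun s => s.1
      pa := fun s x => s.2.1 x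
      pb := fun s y => s.2.2 y
      meas_px := fun x => (measurable_pi_apply x).comp (measurable_subtype_coe.comp measurable_fst)
      meas_pa := fun x a => (measurable_pi_apply a).comp (measurable_subtype_coe.comp
        ((measurable_pi_apply x).comp (measurable_fst.comp measurable_snd)))
      meas_pb := fun y b => (measurable_pi_apply b).comp (measurable_subtype_coe.comp
        ((measurable_pi_apply y).comp (measurable_snd.comp measurable_snd)))
      px_nonneg := fun s => s.1.2.1
      px_sum := fun s => s.1.2.2
      pa_nonneg := fun s x => (s.2.1 x).2.1
      pa_sum := fun s x => (s.2.1 x).2.2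
      pb_nonneg := fun s y => (s.2.2 y).2.1
      pb_sum := fun s y => (s.2.2 y).2.2
      repr := hrepr
      leak := hleak }⟩

theorem isCompact_memAMDL [Nonempty X] (κ : ℝ) :
    IsCompact {P : A → B → X → Y → ℝ | MemAMDL κ P} := by
  simp only [memAMDL_iff]
  exact isCompact_setOf_integral_eq Strategy.continuous_leakage Strategy.continuous_prob κ

end

/-- `AMDL(κ)` is closed and compact in `ℝ^(𝒜×ℬ×𝒳×𝒴)`. -/
theorem amdl_closed_compact
    (X Y A B : Type) [Fintype X] [Fintype Y] [Fintype A] [Fintype B]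
    [Nonempty X] [Nonempty Y] [Nonempty A] [Nonempty B]
    (κ : ℝ) (hκ : 0 ≤ κ) :
    IsClosed {P : A → B → X → Y → ℝ | MemAMDL κ P} ∧
    IsCompact {P : A → B → X → Y → ℝ | MemAMDL κ P} := by
  exact ⟨(isCompact_memAMDL κ).isClosed, isCompact_memAMDL κ⟩
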